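/- Let θ be an algebraic integer with minimal polynomial f ∈ ℤ[t], let K = ℚ(θ) with ring of integers O_K, and let p be a rational prime. Let f̄ = φ₁^{e₁}···φ_r^{e_r} be the factorization of the reduction f̄ of f into monic irreducible polynomials in 𝔽_p[t], let μ_i ∈ ℤ[t] be any monic lift of φ_i, and let g ∈ ℤ[t] be such that f = μ₁^{e₁}···μ_r^{e_r} + p·g. Then the following are equivalent: (1) ℤ[θ] is p-maximal, i.e. p does not divide the index [O_K : ℤ[θ]]; (2) for every i, either e_i = 1 or φ_i does not divide ḡ in 𝔽_p[t]. -/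

import Mathlib

/-!
Write `A = ℤ[θ]` and `h_i = f̃ / μ_i`, where `f̃ = ∏ μ_j ^ e_j`, so that `f = μ_i h_i + p g`. As `A`
has finite index in `𝓞 K`, Cauchy's theorem shows that `p` divides the index exactly when some
`x ∈ 𝓞 K` outside `A` has `p x ∈ A` (`dvd_index_iff`).

If `e_i ≥ 2` and `φ_i ∣ ḡ`, say `g = μ_i a + p b` and `h_i = μ_i c`, then `y = (h_i + p a)(θ)`
satisfies `μ_i(θ) y = -p² b(θ)`, hence `y² = p a(θ) y - p² (b c)(θ)`. So `y / p` is a root of a monic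
quadratic polynomial over `A` and is integral; it is not in `A`, because `f̄` does not divide the
nonzero polynomial `h̄_i` of smaller degree (`exists_integral_of_dvd`).

Conversely, given such an `x`, the polynomials `q` with `q(θ) ∈ p 𝓞 K` reduce to an ideal of
`𝔽_p[t]` strictly containing `(f̄)`. This ideal contains some `h̄_i`, that is `h_i(θ) = p z` with
`z ∈ 𝓞 K` and therefore `μ_i(θ) z = -g(θ)`. A prime of `𝓞 K` above the prime `(p, μ_i(θ))` of `A`
contains both `p` and `μ_i(θ)`, so it contains `h_i(θ)` and `g(θ)`. Hence `φ_i` divides `h̄_i`, which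
forces `e_i ≥ 2`, and `φ_i` divides `ḡ` (`dvd_of_aeval_mul_eq`).
-/

open Polynomial

/-! ### Reduction of polynomials modulo `p` -/

section Reduction

variable {p : ℕ} [Fact p.Prime]

lemma exists_lift (q : (ZMod p)[X]) : ∃ Q : ℤ[X], Q.map (Int.castRingHom (ZMod p)) = q :=
  Polynomial.map_surjective _ (ZMod.ringHom_surjective _) q

lemma exists_eq_C_mul_of_map_eq_zero {q : ℤ[X]} (h : q.map (Int.castRingHom (ZMod p)) = 0) :
    ∃ b, q = C (p : ℤ) * b := by
  have : C (p : ℤ) ∣ q := by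
    rw [Polynomial.C_dvd_iff_dvd_coeff]
    intro i
    have := congrArg (fun s => s.coeff i) h
    simpa [ZMod.intCast_zmod_eq_zero_iff_dvd, ← ZMod.intCast_zmod_eq_zero_iff_dvd] using this
  exact this

end Reduction

section NumberField

/-! ### The index of `ℤ[θ]` -/

variable {K : Type*} [Field K] {θ : NumberField.RingOfIntegers K}

lemma mem_adjoin_iff_exists_aeval {x : NumberField.RingOfIntegers K} :
    x ∈ Algebra.adjoin ℤ {θ} ↔ ∃ q : ℤ[X], aeval θ q = x := by
  rw [Algebra.adjoin_singleton_eq_range_aeval]; rfl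

variable [NumberField K]

lemma exists_ne_zero_mul_mem_adjoin (hgen : Algebra.adjoin ℚ {(θ : K)} = ⊤)
    (x : NumberField.RingOfIntegers K) :
    ∃ n : ℤ, n ≠ 0 ∧ (n : NumberField.RingOfIntegers K) * x ∈ Algebra.adjoin ℤ {θ} := by
  have key : ∀ y ∈ Algebra.adjoin ℚ {(θ : K)}, ∃ n : ℤ, n ≠ 0 ∧
      ∃ q : ℤ[X], (n : K) * y = ((aeval θ q : NumberField.RingOfIntegers K) : K) := by
    intro y hy
    induction hy using Algebra.adjoin_induction with
    | mem y hy => exact ⟨1, one_ne_zero, X, by simp_all⟩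
    | algebraMap c =>
      refine ⟨c.den, by simp, C c.num, ?_⟩
      have h : (c.den : ℚ) * c = c.num := Rat.den_mul_eq_num c
      have h' : (c.den : K) * (c : K) = c.num := by exact_mod_cast congrArg (Rat.cast : ℚ → K) h
      simpa using h'
    | add a b _ _ ha hb =>
      obtain ⟨n, hn, q, hq⟩ := ha
      obtain ⟨m, hm, s, hs⟩ := hb
      refine ⟨n * m, mul_ne_zero hn hm, C m * q + C n * s, ?_⟩
      simp only [map_add, map_mul, aeval_C, ← hq, ← hs]
      simp
      ring
    | mul a b _ _ ha hb =>
      obtain ⟨n, hn, q, hq⟩ := ha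
      obtain ⟨m, hm, s, hs⟩ := hb
      refine ⟨n * m, mul_ne_zero hn hm, q * s, ?_⟩
      simp only [map_mul, ← hq, ← hs]
      push_cast
      ring
  obtain ⟨n, hn, q, hq⟩ := key x (by rw [hgen]; trivial)
  refine ⟨n, hn, mem_adjoin_iff_exists_aeval.2 ⟨q, ?_⟩⟩
  apply NumberField.RingOfIntegers.ext
  rw [← hq]
  simp

lemma finite_quotient_adjoin (hgen : Algebra.adjoin ℚ {(θ : K)} = ⊤) :
    Finite (NumberField.RingOfIntegers K ⧸ (Algebra.adjoin ℤ {θ}).toSubring.toAddSubgroup) := by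
  let N : Submodule ℤ (NumberField.RingOfIntegers K) :=
    Subalgebra.toSubmodule (Algebra.adjoin ℤ {θ})
  have : Finite (NumberField.RingOfIntegers K ⧸ N) := by
    apply Module.finite_of_fg_torsion
    intro x
    obtain ⟨x, rfl⟩ := N.mkQ_surjective x
    obtain ⟨n, hn, hx⟩ := exists_ne_zero_mul_mem_adjoin hgen x
    refine ⟨⟨n, mem_nonZeroDivisors_of_ne_zero hn⟩, ?_⟩
    change n • N.mkQ x = 0
    rw [← map_smul]
    simpa [N] using hx
  exact this

/-- Cauchy's theorem in the finite group `𝓞 K / ℤ[θ]`. -/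
lemma dvd_index_iff (hgen : Algebra.adjoin ℚ {(θ : K)} = ⊤) (p : ℕ) [Fact p.Prime] :
    p ∣ (Algebra.adjoin ℤ {θ}).toSubring.toAddSubgroup.index ↔
      ∃ x : NumberField.RingOfIntegers K, x ∉ Algebra.adjoin ℤ {θ} ∧
        (p : NumberField.RingOfIntegers K) * x ∈ Algebra.adjoin ℤ {θ} := by
  have := finite_quotient_adjoin hgen
  set H := (Algebra.adjoin ℤ {θ}).toSubring.toAddSubgroup
  have hmem (x : NumberField.RingOfIntegers K) : x ∈ H ↔ x ∈ Algebra.adjoin ℤ {θ} := Iff.rfl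
  have hsmul (x : NumberField.RingOfIntegers K) :
      p • (x : NumberField.RingOfIntegers K ⧸ H) = 0 ↔
        (p : NumberField.RingOfIntegers K) * x ∈ Algebra.adjoin ℤ {θ} := by
    rw [← hmem, ← QuotientAddGroup.eq_zero_iff, ← nsmul_eq_mul]
    rfl
  constructor
  · intro h
    obtain ⟨x, hx⟩ := exists_prime_addOrderOf_dvd_card' p h
    obtain ⟨x, rfl⟩ := QuotientAddGroup.mk_surjective x
    refine ⟨x, fun hx' => ?_, (hsmul x).1 (hx ▸ addOrderOf_nsmul_eq_zero _)⟩
    rw [← hmem, ← QuotientAddGroup.eq_zero_iff] at hx'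
    rw [hx', addOrderOf_zero] at hx
    exact (Fact.out : p.Prime).one_lt.ne hx
  · rintro ⟨x, hx, hpx⟩
    rw [← hmem, ← QuotientAddGroup.eq_zero_iff] at hx
    rw [← addOrderOf_eq_prime ((hsmul x).2 hpx) hx]
    exact addOrderOf_dvd_natCard _

/-! ### Divisibility modulo `p` and elements of `𝓞 K` -/

variable {p : ℕ} [Fact p.Prime]

lemma minpoly_dvd_of_aeval_eq_zero {q : ℤ[X]} (h : aeval θ q = 0) : minpoly ℤ θ ∣ q :=
  minpoly.isIntegrallyClosed_dvd (NumberField.RingOfIntegers.isIntegral θ) h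

lemma map_minpoly_dvd_of_aeval_eq {q s : ℤ[X]}
    (h : aeval θ q = (p : NumberField.RingOfIntegers K) * aeval θ s) :
    (minpoly ℤ θ).map (Int.castRingHom (ZMod p)) ∣ q.map (Int.castRingHom (ZMod p)) := by
  have := minpoly_dvd_of_aeval_eq_zero (θ := θ) (q := q - C (p : ℤ) * s) (by simp [h])
  simpa using Polynomial.map_dvd (Int.castRingHom (ZMod p)) this

/-- Lying over for the prime `(p, φ(θ))` of `ℤ[θ]`: if a prime of `𝓞 K` above it contains `m(θ)`,
then it contains every multiple `w(θ) = m(θ) z` in `𝓞 K`. -/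
lemma dvd_of_aeval_mul_eq {φ : (ZMod p)[X]} (hφ : Irreducible φ)
    (hφf : φ ∣ (minpoly ℤ θ).map (Int.castRingHom (ZMod p)))
    {m w : ℤ[X]} {z : NumberField.RingOfIntegers K} (h : aeval θ m * z = aeval θ w)
    (hm : φ ∣ m.map (Int.castRingHom (ZMod p))) : φ ∣ w.map (Int.castRingHom (ZMod p)) := by
  let _ : Algebra ℤ[X] (NumberField.RingOfIntegers K) := (aeval θ).toRingHom.toAlgebra
  have hmap (q : ℤ[X]) : algebraMap ℤ[X] (NumberField.RingOfIntegers K) q = aeval θ q := rfl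
  have : IsScalarTower ℤ ℤ[X] (NumberField.RingOfIntegers K) :=
    IsScalarTower.of_algebraMap_eq fun n => by simp [hmap]
  have : Algebra.IsIntegral ℤ[X] (NumberField.RingOfIntegers K) :=
    Algebra.IsIntegral.tower_top (R := ℤ)
  let P : Ideal ℤ[X] :=
    (Ideal.span {φ}).comap (Polynomial.mapRingHom (Int.castRingHom (ZMod p)))
  have hP (q : ℤ[X]) : q ∈ P ↔ φ ∣ q.map (Int.castRingHom (ZMod p)) := by
    simp [P, Ideal.mem_span_singleton]
  have : (Ideal.span {φ}).IsPrime := (Ideal.span_singleton_prime hφ.ne_zero).2 hφ.prime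
  have : P.IsPrime := Ideal.comap_isPrime _ _
  obtain ⟨Q, -, hQ, hQP⟩ := Ideal.exists_ideal_over_prime_of_isIntegral P
    (⊥ : Ideal (NumberField.RingOfIntegers K)) (by
      intro q hq
      rw [hP]
      exact hφf.trans (Polynomial.map_dvd _ (minpoly_dvd_of_aeval_eq_zero (θ := θ) (by
        simpa [hmap] using hq))))
  rw [← hP, ← hQP, Ideal.mem_comap] at hm ⊢
  rw [hmap] at hm ⊢
  rw [← h]
  exact Ideal.mul_mem_right _ _ hm

/-- The element `x` is `(h + p a)(θ) / p`, where `g = m a + p b`: it is a root of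
`X ^ 2 - a(θ) X + (b c)(θ)`, and it lies outside `ℤ[θ]` because `m̄ h̄ = f̄` does not divide `h̄`. -/
lemma exists_integral_of_dvd {m h c g : ℤ[X]}
    (hf : minpoly ℤ θ = m * h + C (p : ℤ) * g) (hc : h = m * c)
    (hunit : ¬ IsUnit (m.map (Int.castRingHom (ZMod p))))
    (hdvd : m.map (Int.castRingHom (ZMod p)) ∣ g.map (Int.castRingHom (ZMod p))) :
    ∃ x : NumberField.RingOfIntegers K, x ∉ Algebra.adjoin ℤ {θ} ∧
      (p : NumberField.RingOfIntegers K) * x ∈ Algebra.adjoin ℤ {θ} := by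
  have hp0 : (p : K) ≠ 0 := by exact_mod_cast (Fact.out : p.Prime).ne_zero
  obtain ⟨a', ha'⟩ := hdvd
  obtain ⟨a, rfl⟩ := exists_lift a'
  obtain ⟨b, hb⟩ := exists_eq_C_mul_of_map_eq_zero (p := p) (q := g - m * a) (by simp [ha'])
  have hg : g = m * a + C (p : ℤ) * b := by rw [← hb]; ring
  -- the quadratic relation satisfied by `(h + p a)(θ)`
  have hquad : (aeval θ (h + C (p : ℤ) * a)) ^ 2 =
      (p : NumberField.RingOfIntegers K) * aeval θ a * aeval θ (h + C (p : ℤ) * a)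
        - (p : NumberField.RingOfIntegers K) ^ 2 * aeval θ (b * c) := by
    have h0 := minpoly.aeval ℤ θ
    rw [hf, hg] at h0
    have h1 : aeval θ h = aeval θ m * aeval θ c := by rw [hc, map_mul]
    have hC : aeval θ (C (p : ℤ)) = (p : NumberField.RingOfIntegers K) := by simp
    simp only [map_add, map_mul (aeval θ), hC] at h0 ⊢
    linear_combination (aeval θ c) * h0 + (aeval θ h + p * aeval θ a) * h1
  set y := aeval θ (h + C (p : ℤ) * a) with hy
  have hint : IsIntegral (NumberField.RingOfIntegers K) ((y : K) / p) := by
    refine ⟨X ^ 2 + (C (-aeval θ a) * X + C (aeval θ (b * c))), ?_, ?_⟩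
    · exact monic_X_pow_add (by
        refine (degree_linear_le).trans_lt ?_
        norm_num)
    · have := congrArg (algebraMap (NumberField.RingOfIntegers K) K) hquad
      simp only [map_sub, map_mul (algebraMap (NumberField.RingOfIntegers K) K), map_pow,
        map_natCast] at this
      simp only [eval₂_add, eval₂_mul, eval₂_pow, eval₂_X, eval₂_C,
        map_neg (algebraMap (NumberField.RingOfIntegers K) K)]
      field_simp
      linear_combination this
  obtain ⟨x, hx⟩ := (IsIntegrallyClosed.isIntegral_iff (R := NumberField.RingOfIntegers K)).1 hint
  have hpx : (p : NumberField.RingOfIntegers K) * x = y := by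
    apply NumberField.RingOfIntegers.ext
    change algebraMap (NumberField.RingOfIntegers K) K (p * x) = y
    rw [map_mul, hx, map_natCast]
    field_simp
  refine ⟨x, fun hxA => ?_, mem_adjoin_iff_exists_aeval.2 ⟨_, hpx.symm⟩⟩
  obtain ⟨s, rfl⟩ := mem_adjoin_iff_exists_aeval.1 hxA
  have hd := map_minpoly_dvd_of_aeval_eq (p := p) (hy.symm.trans hpx.symm)
  have hf0 : (minpoly ℤ θ).map (Int.castRingHom (ZMod p)) ≠ 0 :=
    map_monic_ne_zero (minpoly.monic (NumberField.RingOfIntegers.isIntegral θ))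
  -- modulo `p` this says that `m̄ h̄` divides `h̄`
  have hfm : (minpoly ℤ θ).map (Int.castRingHom (ZMod p)) =
      m.map (Int.castRingHom (ZMod p)) * h.map (Int.castRingHom (ZMod p)) := by simp [hf]
  rw [hfm] at hd hf0
  have hd' : m.map (Int.castRingHom (ZMod p)) * h.map (Int.castRingHom (ZMod p)) ∣
      1 * h.map (Int.castRingHom (ZMod p)) := by simpa using hd
  exact hunit (isUnit_of_dvd_one ((mul_dvd_mul_iff_right (right_ne_zero_of_mul hf0)).1 hd'))

/-- The ideal of reductions of polynomials `q` with `q(θ) ∈ p 𝓞 K` properly contains `(f̄)` when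
`ℤ[θ]` is not `p`-maximal; its generator is then a proper divisor of `f̄`, so it divides the cofactor
of some irreducible factor of `f̄`. -/
lemma exists_irreducible_cofactor {x : NumberField.RingOfIntegers K}
    (hx : x ∉ Algebra.adjoin ℤ {θ})
    (hpx : (p : NumberField.RingOfIntegers K) * x ∈ Algebra.adjoin ℤ {θ}) :
    ∃ φ : (ZMod p)[X], Irreducible φ ∧ φ ∣ (minpoly ℤ θ).map (Int.castRingHom (ZMod p)) ∧
      ∀ q : ℤ[X], (minpoly ℤ θ).map (Int.castRingHom (ZMod p)) ∣
        φ * q.map (Int.castRingHom (ZMod p)) →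
        ∃ z, aeval θ q = (p : NumberField.RingOfIntegers K) * z := by
  let π := Polynomial.mapRingHom (Int.castRingHom (ZMod p))
  have hπ : Function.Surjective π := exists_lift
  let I : Ideal ℤ[X] := (Ideal.span {(p : NumberField.RingOfIntegers K)}).comap (aeval θ)
  have hI (q : ℤ[X]) : q ∈ I ↔ (p : NumberField.RingOfIntegers K) ∣ aeval θ q := by
    simp [I, Ideal.mem_span_singleton]
  have hImap (q : ℤ[X]) (hq : π q ∈ I.map π) : q ∈ I := by
    obtain ⟨s, hs, hsq⟩ := (Ideal.mem_map_iff_of_surjective π hπ).1 hq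
    obtain ⟨b, hb⟩ := exists_eq_C_mul_of_map_eq_zero (p := p) (q := q - s) (by
      simpa [π, sub_eq_zero] using hsq.symm)
    have : q = s + C (p : ℤ) * b := by rw [← hb]; ring
    rw [hI] at hs ⊢
    rw [this, map_add]
    exact dvd_add hs (by simp)
  obtain ⟨d, hd⟩ := IsPrincipalIdealRing.principal (I.map π)
  have hd' (q : ℤ[X]) : q ∈ I ↔ d ∣ π q := by
    rw [← Ideal.mem_span_singleton]
    change q ∈ I ↔ π q ∈ Submodule.span _ {d}
    rw [← hd]
    exact ⟨Ideal.mem_map_of_mem _, hImap q⟩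
  obtain ⟨u, hu⟩ : d ∣ π (minpoly ℤ θ) := (hd' _).1 ((hI _).2 (by simp))
  have hf0 : π (minpoly ℤ θ) ≠ 0 :=
    map_monic_ne_zero (minpoly.monic (NumberField.RingOfIntegers.isIntegral θ))
  have hu0 : u ≠ 0 := right_ne_zero_of_mul (hu ▸ hf0)
  have hd0 : d ≠ 0 := left_ne_zero_of_mul (hu ▸ hf0)
  have hunit : ¬ IsUnit u := by
    intro hunit
    obtain ⟨q, hq⟩ := mem_adjoin_iff_exists_aeval.1 hpx
    have hqd : d ∣ π q := (hd' q).1 ((hI q).2 (hq ▸ dvd_mul_right _ _))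
    -- a unit `u` would give `q ∈ (p, f)`, that is `p x ∈ p ℤ[θ]`
    have hfq : π (minpoly ℤ θ) ∣ π q := by rw [hu]; exact hunit.mul_right_dvd.2 hqd
    obtain ⟨s', hs'⟩ := hfq
    obtain ⟨s, rfl⟩ := hπ s'
    obtain ⟨b, hb⟩ := exists_eq_C_mul_of_map_eq_zero (p := p) (q := q - minpoly ℤ θ * s) (by
      simpa [π, sub_eq_zero] using hs')
    have hbx : (p : NumberField.RingOfIntegers K) * x = p * aeval θ b := by
      have := congrArg (aeval θ) hb
      simpa [hq] using this
    have hp0 : (p : NumberField.RingOfIntegers K) ≠ 0 := by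
      exact_mod_cast (Fact.out : p.Prime).ne_zero
    exact hx (mem_adjoin_iff_exists_aeval.2 ⟨b, (mul_left_cancel₀ hp0 hbx).symm⟩)
  obtain ⟨φ, hφ, hφu⟩ := WfDvdMonoid.exists_irreducible_factor hunit hu0
  refine ⟨φ, hφ, hφu.trans ⟨d, by rw [mul_comm]; exact hu⟩, fun q hq => ?_⟩
  have : d * φ ∣ π q * φ := by
    rw [mul_comm (π q)]
    refine (mul_dvd_mul_left d hφu).trans ?_
    rw [← hu]
    exact hq
  exact (hI q).1 ((hd' q).2 ((mul_dvd_mul_iff_right hφ.ne_zero).1 this))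

end NumberField

/-! ### The criterion -/

/-- **Dedekind's criterion (1878).** Let `θ` be an algebraic integer generating the number
field `K = ℚ(θ)` with ring of integers `𝓞 K`, `f` its minimal polynomial over `ℤ`, and `p` a
rational prime.  Given the factorization `f̄ = φ₁^{e₁} ⋯ φ_r^{e_r}` into distinct monic
irreducibles over `𝔽_p`, monic lifts `μ_i` of the `φ_i`, and `g` with
`f = μ₁^{e₁} ⋯ μ_r^{e_r} + p g`, the ring `ℤ[θ]` is `p`-maximal (i.e. `p` does not divide the
index of `ℤ[θ]` in `𝓞 K`) if and only if for each `i`, either `e_i = 1` or `φ_i ∤ ḡ`. -/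
theorem dedekind_criterion
    (K : Type*) [Field K] [NumberField K]
    (θ : NumberField.RingOfIntegers K)
    (hgen : Algebra.adjoin ℚ {(θ : K)} = ⊤)
    (p : ℕ) [Fact p.Prime]
    (r : ℕ) (φ : Fin r → Polynomial (ZMod p)) (e : Fin r → ℕ)
    (hφmonic : ∀ i, (φ i).Monic)
    (hφirr : ∀ i, Irreducible (φ i))
    (hφdist : ∀ i j, i ≠ j → φ i ≠ φ j)
    (he : ∀ i, 1 ≤ e i)
    (hfact : (minpoly ℤ θ).map (Int.castRingHom (ZMod p)) = ∏ i, φ i ^ e i)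
    (μ : Fin r → Polynomial ℤ)
    (hμmonic : ∀ i, (μ i).Monic)
    (hμlift : ∀ i, (μ i).map (Int.castRingHom (ZMod p)) = φ i)
    (g : Polynomial ℤ)
    (hg : minpoly ℤ θ = ∏ i, (μ i) ^ e i + Polynomial.C (p : ℤ) * g) :
    ¬ (p ∣ (Algebra.adjoin ℤ {θ}).toSubring.toAddSubgroup.index) ↔
      ∀ i, e i = 1 ∨ ¬ (φ i ∣ g.map (Int.castRingHom (ZMod p))) := by
  have hprod (i : Fin r) : ∏ j, μ j ^ e j =
      μ i * (μ i ^ (e i - 1) * ∏ j ∈ Finset.univ.erase i, μ j ^ e j) := by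
    rw [← mul_assoc, ← pow_succ', Nat.sub_add_cancel (he i),
      Finset.mul_prod_erase _ (fun j => μ j ^ e j) (Finset.mem_univ i)]
  have hφf (i : Fin r) : φ i ∣ (minpoly ℤ θ).map (Int.castRingHom (ZMod p)) := by
    rw [hfact]
    exact (dvd_pow_self _ (Nat.one_le_iff_ne_zero.1 (he i))).trans
      (Finset.dvd_prod_of_mem (fun j => φ j ^ e j) (Finset.mem_univ i))
  rw [dvd_index_iff hgen, ← not_iff_not, not_not]
  push Not
  constructor
  · rintro ⟨x, hx, hpx⟩
    obtain ⟨ψ, hψ, hψf, hcof⟩ := exists_irreducible_cofactor hx hpx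
    rw [hfact] at hψf
    obtain ⟨i, -, hi⟩ := (hψ.prime.dvd_finsetProd_iff _).1 hψf
    have hiψ : φ i ∣ ψ := (hψ.associated_of_dvd (hφirr i) (hψ.prime.dvd_of_dvd_pow hi)).dvd'
    set h := μ i ^ (e i - 1) * ∏ j ∈ Finset.univ.erase i, μ j ^ e j with hh
    have hf : minpoly ℤ θ = μ i * h + C (p : ℤ) * g := by rw [hg, hprod i]
    obtain ⟨z, hz⟩ := hcof h (by
      rw [hf]
      simpa [hμlift] using mul_dvd_mul_right hiψ _)
    have hp0 : (p : NumberField.RingOfIntegers K) ≠ 0 := by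
      exact_mod_cast (Fact.out : p.Prime).ne_zero
    have hμz : aeval θ (μ i) * z = aeval θ (-g) := by
      have h0 := minpoly.aeval ℤ θ
      have hC : aeval θ (C (p : ℤ)) = (p : NumberField.RingOfIntegers K) := by simp
      rw [hf, map_add, map_mul _ (μ i) h, map_mul _ (C (p : ℤ)) g, hz, hC] at h0
      apply mul_left_cancel₀ hp0
      rw [map_neg]
      linear_combination h0
    refine ⟨i, fun hei => ?_, ?_⟩
    -- `h(θ) = p z` gives `φ i ∣ h̄`, whereas for `e i = 1` the cofactor `h̄` is prime to `φ i`
    · have hd := dvd_of_aeval_mul_eq (hφirr i) (hφf i) (m := C (p : ℤ)) (w := h) (z := z)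
        (by simp [hz]) (by simp)
      rw [hh, hei] at hd
      simp only [Nat.sub_self, pow_zero, one_mul, Polynomial.map_prod, Polynomial.map_pow,
        hμlift] at hd
      obtain ⟨j, hj, hij⟩ := ((hφirr i).prime.dvd_finsetProd_iff _).1 hd
      have hass := (hφirr i).associated_of_dvd (hφirr j) ((hφirr i).prime.dvd_of_dvd_pow hij)
      exact hφdist i j (Finset.ne_of_mem_erase hj).symm
        (eq_of_monic_of_associated (hφmonic i) (hφmonic j) hass)
    · have hd := dvd_of_aeval_mul_eq (hφirr i) (hφf i) hμz (by rw [hμlift])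
      simpa using hd
  · rintro ⟨i, hei, hi⟩
    refine exists_integral_of_dvd (m := μ i) (g := g)
      (c := μ i ^ (e i - 2) * ∏ j ∈ Finset.univ.erase i, μ j ^ e j) (hg.trans (by rw [hprod i]))
      ?_ ?_ ?_
    · have := he i
      rw [← mul_assoc, ← pow_succ', show e i - 2 + 1 = e i - 1 by omega]
    · rw [hμlift]
      exact (hφirr i).not_isUnit
    · rwa [hμlift]
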